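/- arXiv:0711.4229 — 5 statements merged into one kernel-verified Lean document; each statement's English description precedes it below -/
import Mathlib

section
/- Let V be an object of C. Then for every endomorphism f of V ⊗ V one has tr_R(f) = tr_L(c_{V,V}^{-1} ∘ f ∘ c_{V,V}). -/
open CategoryTheory MonoidalCategory

namespace RibbonPaper

/-- A twist (balancing/ribbon structure) on a braided category with right duals:
a natural family of isomorphisms `θ V : V ⟶ V` satisfying
`θ (V ⊗ W) = c_{W,V} ∘ c_{V,W} ∘ (θ V ⊗ θ W)` and `θ (Vᘁ) = (θ V)ᘁ`. -/
structure Twist (C : Type*) [Category C] [MonoidalCategory C] [BraidedCategory C]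
    [RightRigidCategory C] where
  θ : ∀ V : C, V ⟶ V
  isIso : ∀ V : C, IsIso (θ V)
  natural : ∀ {V W : C} (f : V ⟶ W), f ≫ θ W = θ V ≫ f
  tensor : ∀ V W : C, θ (V ⊗ W) = (θ V ⊗ₘ θ W) ≫ (β_ V W).hom ≫ (β_ W V).hom
  dual : ∀ V : C, θ (Vᘁ) = (θ V)ᘁ

variable {C : Type*} [Category C] [MonoidalCategory C] [BraidedCategory C]
  [Preadditive C] [MonoidalPreadditive C] [RightRigidCategory C]

variable (T : Twist C)

/-- The modified evaluation `d'_V := d_V ∘ c_{V,V*} ∘ (θ_V ⊗ id_{V*})`. -/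
def dP (V : C) : V ⊗ Vᘁ ⟶ 𝟙_ C :=
  (T.θ V ⊗ₘ 𝟙 (Vᘁ)) ≫ (β_ V (Vᘁ)).hom ≫ ε_ V (Vᘁ)

/-- The modified coevaluation `b'_V := (id_{V*} ⊗ θ_V) ∘ c_{V,V*} ∘ b_V`. -/
def bP (V : C) : 𝟙_ C ⟶ Vᘁ ⊗ V :=
  η_ V (Vᘁ) ≫ (β_ V (Vᘁ)).hom ≫ (𝟙 (Vᘁ) ⊗ₘ T.θ V)

/-- The partial right trace `⟨f⟩_R`-endomorphism:
`(id_U ⊗ d'_V) ∘ (f ⊗ id_{V*}) ∘ (id_U ⊗ b_V) : U ⟶ U`. -/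
def ptrR {U V : C} (f : U ⊗ V ⟶ U ⊗ V) : U ⟶ U :=
  (ρ_ U).inv ≫ (U ◁ η_ V (Vᘁ)) ≫ (α_ U V (Vᘁ)).inv ≫ (f ▷ (Vᘁ)) ≫
    (α_ U V (Vᘁ)).hom ≫ (U ◁ dP T V) ≫ (ρ_ U).hom

/-- The partial left trace `⟨f⟩_L`-endomorphism:
`(d_U ⊗ id_V) ∘ (id_{U*} ⊗ f) ∘ (b'_U ⊗ id_V) : V ⟶ V`. -/
def ptrL {U V : C} (f : U ⊗ V ⟶ U ⊗ V) : V ⟶ V :=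
  (λ_ V).inv ≫ (bP T U ▷ V) ≫ (α_ (Uᘁ) U V).hom ≫ ((Uᘁ) ◁ f) ≫
    (α_ (Uᘁ) U V).inv ≫ (ε_ U (Uᘁ) ▷ V) ≫ (λ_ V).hom

/-- An object `V` is ambidextrous if `tr_L f = tr_R f` for all `f : V ⊗ V ⟶ V ⊗ V`. -/
def Ambidextrous (V : C) : Prop := ∀ f : V ⊗ V ⟶ V ⊗ V, ptrL T f = ptrR T f

/-- The categorical trace `tr_C(f) := d'_V ∘ (f ⊗ id_{V*}) ∘ b_V ∈ K = End(𝟙)`. -/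
def trC {V : C} (f : V ⟶ V) : 𝟙_ C ⟶ 𝟙_ C :=
  η_ V (Vᘁ) ≫ (f ▷ (Vᘁ)) ≫ dP T V

/-- The categorical (quantum) dimension `dim V := tr_C(id_V)`. -/
def qdim (V : C) : 𝟙_ C ⟶ 𝟙_ C := trC T (𝟙 V)

/-- The action of `K = End(𝟙)` on Hom-groups: `k • f := k ⊗ f` (up to unitors). -/
def smul {V W : C} (k : 𝟙_ C ⟶ 𝟙_ C) (f : V ⟶ W) : V ⟶ W :=
  (λ_ V).inv ≫ (k ⊗ₘ f) ≫ (λ_ W).hom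

/-- `V` is simple if `End(V) = K ⋅ id_V`. -/
def IsSimple (V : C) : Prop := ∀ f : V ⟶ V, ∃ k : 𝟙_ C ⟶ 𝟙_ C, f = smul k (𝟙 V)

/-- The endomorphism of `Y` computing `S'(X,Y)`:
`(id_Y ⊗ d'_X) ∘ ((c_{X,Y} ∘ c_{Y,X}) ⊗ id_{X*}) ∘ (id_Y ⊗ b_X)`. -/
def SMap (X Y : C) : Y ⟶ Y := ptrR T ((β_ Y X).hom ≫ (β_ X Y).hom)

/-- `V ∈ A(J)`: `V` is simple and `S'(J,V) ≠ 0`. -/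
def InA (J V : C) : Prop :=
  IsSimple V ∧ ∃ s : 𝟙_ C ⟶ 𝟙_ C, SMap T J V = smul s (𝟙 V) ∧ s ≠ 0

section TwistLemmas

variable {D : Type*} [Category D] [MonoidalCategory D] [BraidedCategory D]
  [RightRigidCategory D]

/-- A twist is trivial on the monoidal unit. -/
theorem Twist.θ_unit (T : Twist D) : T.θ (𝟙_ D) = 𝟙 (𝟙_ D) := by
  have := T.isIso (𝟙_ D)
  have h := T.natural (λ_ (𝟙_ D)).hom
  rw [T.tensor, Category.assoc, Category.assoc, braiding_leftUnitor, braiding_rightUnitor,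
    MonoidalCategory.tensorHom_def, Category.assoc, leftUnitor_naturality, ← Category.assoc,
    cancel_mono] at h
  have hw : T.θ (𝟙_ D) ▷ 𝟙_ D = 𝟙 (𝟙_ D) ▷ 𝟙_ D := by
    rw [← cancel_mono (λ_ (𝟙_ D)).hom, ← h, id_whiskerRight, Category.id_comp]
  exact (whiskerRight_iff _ _).mp hw

/-- A morphism out of the unit absorbs the double braiding together with the twists. -/
theorem Twist.unit_comp_braiding (T : Twist D) {V W : D} (g : 𝟙_ D ⟶ V ⊗ W) :
    g ≫ (β_ V W).hom ≫ (β_ W V).hom ≫ (T.θ V ⊗ₘ T.θ W) = g := by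
  have h := T.natural g
  rw [T.θ_unit, Category.id_comp, T.tensor] at h
  simpa only [BraidedCategory.braiding_naturality, BraidedCategory.braiding_naturality_assoc]
    using h

/-- A morphism into the unit absorbs the double braiding together with the twists. -/
theorem Twist.braiding_comp_counit (T : Twist D) {V W : D} (g : V ⊗ W ⟶ 𝟙_ D) :
    (β_ V W).hom ≫ (T.θ W ⊗ₘ T.θ V) ≫ (β_ W V).hom ≫ g = g := by
  have h := T.natural g
  rw [T.θ_unit, Category.comp_id, T.tensor] at h
  simpa only [BraidedCategory.braiding_naturality_assoc, Category.assoc] using h.symm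

end TwistLemmas

section BraidingSlides

variable {D : Type*} [Category D] [MonoidalCategory D] [BraidedCategory D]

/-- A state `𝟙 ⟶ X ⊗ Y` slides through a strand `U`. -/
theorem unit_slide {X Y : D} (U : D) (g : 𝟙_ D ⟶ X ⊗ Y) :
    (λ_ U).inv ≫ g ▷ U ≫ (α_ X Y U).hom ≫ X ◁ (β_ Y U).hom =
      (ρ_ U).inv ≫ U ◁ g ≫ (α_ U X Y).inv ≫ (β_ X U).inv ▷ Y ≫ (α_ X U Y).hom := by
  have h := BraidedCategory.braiding_naturality_left g U
  rw [BraidedCategory.braiding_tensor_left_hom, braiding_tensorUnit_left] at h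
  rw [← cancel_epi (λ_ U).hom, ← cancel_mono ((α_ X U Y).inv ≫ (β_ X U).hom ▷ Y ≫ (α_ U X Y).hom)]
  simpa [← comp_whiskerRight_assoc] using h

/-- An effect `X ⊗ Y ⟶ 𝟙` slides through a strand `U`. -/
theorem counit_slide {X Y : D} (U : D) (g : X ⊗ Y ⟶ 𝟙_ D) :
    X ◁ (β_ Y U).inv ≫ (α_ X Y U).inv ≫ g ▷ U ≫ (λ_ U).hom =
      (α_ X U Y).inv ≫ (β_ X U).hom ▷ Y ≫ (α_ U X Y).hom ≫ U ◁ g ≫ (ρ_ U).hom := by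
  have h := BraidedCategory.braiding_naturality_left g U
  rw [BraidedCategory.braiding_tensor_left_hom, braiding_tensorUnit_left] at h
  rw [← cancel_epi ((α_ X Y U).hom ≫ X ◁ (β_ Y U).hom), ← cancel_mono (ρ_ U).inv]
  simpa [← whiskerLeft_comp_assoc] using h

/-- Conjugating `X ◁ f` by the braidings of `X` past the first tensor factor. -/
theorem braiding_conj_whiskerLeft (X : D) {U V : D} (f : U ⊗ V ⟶ U ⊗ V) :
    (α_ U X V).inv ≫ (β_ X U).inv ▷ V ≫ (α_ X U V).hom ≫ X ◁ f ≫
        (α_ X U V).inv ≫ (β_ X U).hom ▷ V ≫ (α_ U X V).hom ≫ U ◁ (β_ X V).hom =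
      U ◁ (β_ X V).hom ≫ (α_ U V X).inv ≫ f ▷ X ≫ (α_ U V X).hom := by
  have h := BraidedCategory.braiding_naturality_right X f
  rw [BraidedCategory.braiding_tensor_right_hom] at h
  rw [← cancel_epi ((α_ X U V).inv ≫ (β_ X U).hom ▷ V ≫ (α_ U X V).hom),
    ← cancel_mono (α_ U V X).inv]
  simpa [← comp_whiskerRight_assoc] using h

end BraidingSlides

/-- The right partial trace of `f` is the left partial trace of its conjugate by the braiding. -/
theorem ptrR_eq_ptrL_conj_braiding {D : Type*} [Category D] [MonoidalCategory D]
    [BraidedCategory D] [RightRigidCategory D] (T : Twist D) {U V : D} (f : U ⊗ V ⟶ U ⊗ V) :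
    ptrR T f = ptrL T ((β_ V U).hom ≫ f ≫ (β_ V U).inv) := by
  have hη : η_ V (Vᘁ) = bP T V ≫ (β_ (Vᘁ) V).hom ≫ V ◁ T.θ (Vᘁ) := by
    conv_lhs => rw [← T.unit_comp_braiding (η_ V (Vᘁ))]
    simp [bP, MonoidalCategory.tensorHom_def]
  have hε : (β_ (Vᘁ) V).hom ≫ V ◁ T.θ (Vᘁ) ≫ dP T V = ε_ V (Vᘁ) := by
    conv_rhs => rw [← T.braiding_comp_counit (ε_ V (Vᘁ))]
    simp [dP, MonoidalCategory.tensorHom_def']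
  have hL : ptrL T ((β_ V U).hom ≫ f ≫ (β_ V U).inv) =
      ((λ_ U).inv ≫ bP T V ▷ U ≫ (α_ (Vᘁ) V U).hom ≫ (Vᘁ) ◁ (β_ V U).hom) ≫ (Vᘁ) ◁ f ≫
        ((Vᘁ) ◁ (β_ V U).inv ≫ (α_ (Vᘁ) V U).inv ≫ ε_ V (Vᘁ) ▷ U ≫ (λ_ U).hom) := by
    simp [ptrL]
  have hθ : U ◁ V ◁ T.θ (Vᘁ) ≫ (α_ U V (Vᘁ)).inv ≫ f ▷ (Vᘁ) ≫ (α_ U V (Vᘁ)).hom =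
      (α_ U V (Vᘁ)).inv ≫ f ▷ (Vᘁ) ≫ (α_ U V (Vᘁ)).hom ≫ U ◁ V ◁ T.θ (Vᘁ) := by
    rw [← associator_naturality_right, ← whisker_exchange_assoc,
      associator_inv_naturality_right_assoc]
  have hf := braiding_conj_whiskerLeft (Vᘁ) f
  rw [hL, unit_slide, counit_slide, ← hε, ptrR, hη]
  simp only [whiskerLeft_comp, Category.assoc]
  rw [reassoc_of% hθ, reassoc_of% hf]

/-- For every object `V` and every `f : V ⊗ V ⟶ V ⊗ V`,
`tr_R(f) = tr_L(c_{V,V}⁻¹ ∘ f ∘ c_{V,V})`. -/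
theorem statement0 (V : C) (f : V ⊗ V ⟶ V ⊗ V) :
    ptrR T f = ptrL T ((β_ V V).hom ≫ f ≫ (β_ V V).inv) := by
  exact ptrR_eq_ptrL_conj_braiding T f

end RibbonPaper
end

section
/- If J is an object of C such that the braiding c_{J,J} commutes with every element of End(J ⊗ J), then J is ambidextrous. -/
open CategoryTheory MonoidalCategory

namespace RibbonPaper

variable {C : Type*} [Category C] [MonoidalCategory C] [BraidedCategory C]
  [Preadditive C] [MonoidalPreadditive C] [RightRigidCategory C]

variable (T : Twist C)

section

variable {C : Type*} [Category C] [MonoidalCategory C] [BraidedCategory C]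

/-- Sliding a strand `V` across a morphism `𝟙_ C ⟶ U ⊗ X`. -/
lemma whiskerLeft_braiding_inv {U X : C} (V : C) (a : 𝟙_ C ⟶ U ⊗ X) :
    (ρ_ V).inv ≫ V ◁ a ≫ (α_ V U X).inv ≫ (β_ U V).inv ▷ X =
      (λ_ V).inv ≫ a ▷ V ≫ (α_ U X V).hom ≫ U ◁ (β_ X V).hom ≫ (α_ U V X).inv := by
  have key : (λ_ V).inv ≫ a ▷ V ≫ (β_ (U ⊗ X) V).hom = (ρ_ V).inv ≫ V ◁ a := by
    rw [BraidedCategory.braiding_naturality_left, braiding_tensorUnit_left]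
    simp
  rw [← reassoc_of% key, BraidedCategory.braiding_tensor_left_hom]
  simp

/-- Sliding a strand `V` across a morphism `U ⊗ X ⟶ 𝟙_ C`. -/
lemma braiding_hom_whiskerLeft {U X : C} (V : C) (e : U ⊗ X ⟶ 𝟙_ C) :
    (β_ U V).hom ▷ X ≫ (α_ V U X).hom ≫ V ◁ e ≫ (ρ_ V).hom =
      (α_ U V X).hom ≫ U ◁ (β_ X V).inv ≫ (α_ U X V).inv ≫ e ▷ V ≫ (λ_ V).hom := by
  have key : (β_ (U ⊗ X) V).hom ≫ V ◁ e ≫ (ρ_ V).hom = e ▷ V ≫ (λ_ V).hom := by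
    rw [← BraidedCategory.braiding_naturality_left_assoc, braiding_tensorUnit_left]
    simp
  rw [← key, BraidedCategory.braiding_tensor_left_hom]
  simp

/-- Moving a strand `X` from the right of `f` to its left. -/
lemma braiding_conj_whiskerRight {U V X : C} (f : U ⊗ V ⟶ U ⊗ V) :
    (α_ U X V).hom ≫ U ◁ (β_ X V).hom ≫ (α_ U V X).inv ≫ f ▷ X ≫
        (α_ U V X).hom ≫ U ◁ (β_ X V).inv ≫ (α_ U X V).inv =
      (β_ X U).inv ▷ V ≫ (α_ X U V).hom ≫ X ◁ f ≫ (α_ X U V).inv ≫ (β_ X U).hom ▷ V := by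
  have key := ((Iso.inv_comp_eq _).2 (BraidedCategory.braiding_naturality_right X f)).symm
  rw [key, BraidedCategory.braiding_tensor_right_hom, BraidedCategory.braiding_tensor_right_inv]
  simp

namespace Twist

variable [RightRigidCategory C] (T : Twist C)

lemma θ_unit_s1 : T.θ (𝟙_ C) = 𝟙 (𝟙_ C) := by
  have := T.isIso (𝟙_ C)
  have key : T.θ (𝟙_ C) ≫ T.θ (𝟙_ C) = T.θ (𝟙_ C) := by
    have nat := T.natural (λ_ (𝟙_ C)).hom
    rw [T.tensor] at nat
    simpa [← unitors_equal, ← unitors_inv_equal, MonoidalCategory.tensorHom_def] using nat.symm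
  exact (cancel_epi (T.θ (𝟙_ C))).1 (by simpa using key)

end Twist

variable [RightRigidCategory C] (T : Twist C)

lemma bP_comp_θ (U : C) :
    bP T U ≫ T.θ (Uᘁ) ▷ U = η_ U (Uᘁ) ≫ (β_ (Uᘁ) U).inv := by
  have key := T.natural (η_ U (Uᘁ))
  rw [T.θ_unit_s1, Category.id_comp, T.tensor] at key
  rw [Iso.eq_comp_inv, ← key]
  simp [bP, MonoidalCategory.tensorHom_def]

lemma θ_comp_dP (U : C) :
    T.θ (Uᘁ) ▷ U ≫ (β_ (Uᘁ) U).hom ≫ dP T U = ε_ U (Uᘁ) := by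
  have key := T.natural (ε_ U (Uᘁ))
  rw [T.θ_unit_s1, Category.comp_id, T.tensor] at key
  rw [key]
  simp [dP, MonoidalCategory.tensorHom_def]

/-- The left partial trace is the right partial trace of the conjugate by the braiding. -/
lemma ptrL_eq_ptrR_conj_braiding {U V : C} (f : U ⊗ V ⟶ U ⊗ V) :
    ptrL T f = ptrR T ((β_ U V).inv ≫ f ≫ (β_ U V).hom) := by
  simp only [ptrR, comp_whiskerRight, Category.assoc]
  rw [braiding_hom_whiskerLeft, reassoc_of% whiskerLeft_braiding_inv,
    reassoc_of% braiding_conj_whiskerRight, ← comp_whiskerRight_assoc, ← bP_comp_θ T]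
  simp only [ptrL]
  rw [← θ_comp_dP T U]
  simp only [comp_whiskerRight, Category.assoc]
  rw [← associator_inv_naturality_left_assoc, whisker_exchange_assoc,
    associator_naturality_left_assoc]

end

/-- If the braiding `c_{J,J}` commutes with every endomorphism of
`J ⊗ J`, then `J` is ambidextrous. -/
theorem statement1 (J : C)
    (h : ∀ g : J ⊗ J ⟶ J ⊗ J, g ≫ (β_ J J).hom = (β_ J J).hom ≫ g) :
    Ambidextrous T J := by
  intro f
  rw [ptrL_eq_ptrR_conj_braiding, h, Iso.inv_hom_id_assoc]

end RibbonPaper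
end

section
/- If J is a simple object of C with dim(J) ≠ 0, then J is ambidextrous. -/
open CategoryTheory MonoidalCategory

namespace RibbonPaper

variable {C : Type*} [Category C] [MonoidalCategory C] [BraidedCategory C]
  [Preadditive C] [MonoidalPreadditive C] [RightRigidCategory C]

variable (T : Twist C)

/-- Closing up the two strands of an endomorphism of `U ⊗ V` in either order gives the same
scalar. -/
lemma closure_left_right_comm {A U V B : C} (b : 𝟙_ C ⟶ A ⊗ U) (e : A ⊗ U ⟶ 𝟙_ C)
    (n : 𝟙_ C ⟶ V ⊗ B) (d : V ⊗ B ⟶ 𝟙_ C) (f : U ⊗ V ⟶ U ⊗ V) :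
    n ≫ (((λ_ V).inv ≫ (b ▷ V) ≫ (α_ A U V).hom ≫ (A ◁ f) ≫ (α_ A U V).inv ≫ (e ▷ V) ≫
        (λ_ V).hom) ▷ B) ≫ d =
      b ≫ (A ◁ ((ρ_ U).inv ≫ (U ◁ n) ≫ (α_ U V B).inv ≫ (f ▷ B) ≫ (α_ U V B).hom ≫
        (U ◁ d) ≫ (ρ_ U).hom)) ≫ e := by
  let X : (A ⊗ U) ⊗ (V ⊗ B) ⟶ (A ⊗ U) ⊗ (V ⊗ B) :=
    (α_ (A ⊗ U) V B).inv ≫ ((α_ A U V).hom ▷ B) ≫ ((A ◁ f) ▷ B) ≫ ((α_ A U V).inv ▷ B) ≫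
      (α_ (A ⊗ U) V B).hom
  calc
    _ = (λ_ (𝟙_ C)).inv ≫ (𝟙_ C ◁ n ≫ b ▷ (V ⊗ B)) ≫ X ≫ (e ▷ (V ⊗ B) ≫ 𝟙_ C ◁ d) ≫
        (λ_ (𝟙_ C)).hom := by
      dsimp only [X]; monoidal
    _ = (λ_ (𝟙_ C)).inv ≫ (b ▷ 𝟙_ C ≫ (A ⊗ U) ◁ n) ≫ X ≫ ((A ⊗ U) ◁ d ≫ e ▷ 𝟙_ C) ≫
        (λ_ (𝟙_ C)).hom := by
      rw [whisker_exchange, whisker_exchange]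
    _ = _ := by
      dsimp only [X]; monoidal

/-- The right categorical trace agrees with the left one. -/
lemma trC_eq_left {U : C} (g : U ⟶ U) :
    trC T g = bP T U ≫ (Uᘁ ◁ g) ≫ ε_ U (Uᘁ) := by
  simp only [trC, dP, bP, tensorHom_id, id_tensorHom, Category.assoc]
  rw [← comp_whiskerRight_assoc, BraidedCategory.braiding_naturality_left_assoc, T.natural,
    whiskerLeft_comp_assoc]

/-- The two partial traces of an endomorphism have the same categorical trace. -/
lemma trC_ptrL_eq_trC_ptrR {U V : C} (f : U ⊗ V ⟶ U ⊗ V) :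
    trC T (ptrL T f) = trC T (ptrR T f) := by
  rw [trC_eq_left T (ptrR T f)]
  exact closure_left_right_comm _ _ _ _ f

lemma trC_smul_id (V : C) (k : 𝟙_ C ⟶ 𝟙_ C) : trC T (smul k (𝟙 V)) = k ≫ qdim T V := by
  simp only [qdim, trC, smul, tensorHom_id, id_whiskerRight, Category.id_comp]
  calc
    _ = (λ_ (𝟙_ C)).inv ≫ (𝟙_ C ◁ η_ V (Vᘁ) ≫ k ▷ (V ⊗ Vᘁ)) ≫ (λ_ _).hom ≫ dP T V := by
      monoidal
    _ = (λ_ (𝟙_ C)).inv ≫ (k ▷ 𝟙_ C ≫ 𝟙_ C ◁ η_ V (Vᘁ)) ≫ (λ_ _).hom ≫ dP T V := by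
      rw [whisker_exchange]
    _ = _ := by monoidal

/-- If `J` is simple with `dim(J) ≠ 0`, then `J` is ambidextrous.
(The ground ring `K = End(𝟙)` is assumed to be an integral domain.) -/
theorem statement2
    (hK : ∀ a b : 𝟙_ C ⟶ 𝟙_ C, a ≫ b = 0 → a = 0 ∨ b = 0)
    (J : C) (hJ : IsSimple J) (hdim : qdim T J ≠ 0) :
    Ambidextrous T J := by
  intro f
  obtain ⟨a, ha⟩ := hJ (ptrL T f)
  obtain ⟨b, hb⟩ := hJ (ptrR T f)
  have h := trC_ptrL_eq_trC_ptrR T f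
  rw [ha, hb, trC_smul_id, trC_smul_id, ← sub_eq_zero, ← Preadditive.sub_comp] at h
  rw [ha, hb, sub_eq_zero.mp ((hK _ _ h).resolve_right hdim)]

end RibbonPaper
end

section
/- If J is an object of C such that the ring End(J ⊗ J) is commutative, then J is ambidextrous. -/
open CategoryTheory MonoidalCategory

namespace RibbonPaper

variable {C : Type*} [Category C] [MonoidalCategory C] [BraidedCategory C]
  [Preadditive C] [MonoidalPreadditive C] [RightRigidCategory C]

variable (T : Twist C)

/-- A morphism out of the unit can be moved across an object by the braiding. -/
theorem leftUnitor_inv_comp_whiskerRight {D : Type*} [Category D] [MonoidalCategory D]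
    [BraidedCategory D] {Y : D} (V : D) (n : 𝟙_ D ⟶ Y) :
    (λ_ V).inv ≫ n ▷ V = (ρ_ V).inv ≫ V ◁ n ≫ (β_ V Y).hom := by
  simp [BraidedCategory.braiding_naturality_right]

/-- A morphism into the unit can be moved across an object by the braiding. -/
theorem whiskerRight_comp_leftUnitor_hom {D : Type*} [Category D] [MonoidalCategory D]
    [BraidedCategory D] {Y : D} (V : D) (e : Y ⟶ 𝟙_ D) :
    e ▷ V ≫ (λ_ V).hom = (β_ V Y).inv ≫ V ◁ e ≫ (ρ_ V).hom := by
  rw [Iso.eq_inv_comp, ← BraidedCategory.braiding_naturality_right_assoc]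
  simp

/-- A whiskered endomorphism is conjugate by the braiding to its whiskering on the other side. -/
theorem whiskerLeft_eq_braiding_conj {D : Type*} [Category D] [MonoidalCategory D]
    [BraidedCategory D] {Y Z : D} (X : D) (f : Y ⟶ Z) :
    X ◁ f = (β_ Y X).inv ≫ f ▷ X ≫ (β_ Z X).hom := by
  simp

theorem braiding_whiskerRight_comp_braiding_tensor_inv {D : Type*} [Category D]
    [MonoidalCategory D] [BraidedCategory D] (U V X : D) :
    (β_ V (U ⊗ X)).hom ≫ (β_ U X).hom ▷ V ≫ (α_ X U V).hom ≫ (β_ (U ⊗ V) X).inv =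
      (α_ V U X).inv ≫ (β_ V U).hom ▷ X := by
  simp [← comp_whiskerRight_assoc, ← MonoidalCategory.whiskerLeft_comp_assoc]

theorem braiding_tensor_hom_comp_whiskerRight {D : Type*} [Category D]
    [MonoidalCategory D] [BraidedCategory D] (U V X : D) :
    (β_ (U ⊗ V) X).hom ≫ (α_ X U V).inv =
      (β_ V U).inv ▷ X ≫ (α_ V U X).hom ≫ (β_ V (U ⊗ X)).hom ≫ (β_ U X).hom ▷ V := by
  simp [← comp_whiskerRight_assoc]

/-- The left partial trace is the right partial trace of the conjugate by the braiding,
up to the position of the twist. -/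
theorem ptrL_eq_ptrR {D : Type*} [Category D] [MonoidalCategory D] [BraidedCategory D]
    [RightRigidCategory D] (T : Twist D) {U V : D} (f : U ⊗ V ⟶ U ⊗ V) (g : V ⊗ U ⟶ V ⊗ U)
    (h : (β_ V U).hom ≫ T.θ U ▷ V ≫ f ≫ (β_ V U).inv = g ≫ V ◁ T.θ U) :
    ptrL T f = ptrR T g := by
  have hR : ptrR T g = (ρ_ V).inv ≫ V ◁ η_ U (Uᘁ) ≫ (α_ V U (Uᘁ)).inv ≫
      (g ≫ V ◁ T.θ U) ▷ (Uᘁ) ≫ (α_ V U (Uᘁ)).hom ≫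
      V ◁ ((β_ U (Uᘁ)).hom ≫ ε_ U (Uᘁ)) ≫ (ρ_ V).hom := by
    simp [ptrR, dP, -BraidedCategory.braiding_naturality_left_assoc]
  have hL : ptrL T f = ((λ_ V).inv ≫ η_ U (Uᘁ) ▷ V) ≫ (β_ U (Uᘁ)).hom ▷ V ≫
      (α_ (Uᘁ) U V).hom ≫ (Uᘁ) ◁ (T.θ U ▷ V ≫ f) ≫
      (α_ (Uᘁ) U V).inv ≫ ε_ U (Uᘁ) ▷ V ≫ (λ_ V).hom := by
    simp [ptrL, bP]
  rw [hR, hL, ← h, leftUnitor_inv_comp_whiskerRight,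
    whiskerLeft_eq_braiding_conj (Uᘁ) (T.θ U ▷ V ≫ f)]
  have key := braiding_whiskerRight_comp_braiding_tensor_inv U V (Uᘁ)
  have key' := braiding_tensor_hom_comp_whiskerRight U V (Uᘁ)
  have hev := whiskerRight_comp_leftUnitor_hom V ((β_ U (Uᘁ)).hom ≫ ε_ U (Uᘁ))
  rw [comp_whiskerRight, Category.assoc] at hev
  simp only [Category.assoc]
  rw [reassoc_of% key, reassoc_of% key', hev]
  simp only [comp_whiskerRight, Category.assoc, Iso.hom_inv_id_assoc]

/-- If the ring `End(J ⊗ J)` is commutative, then `J` is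
ambidextrous. -/
theorem statement3 (J : C)
    (h : ∀ g g' : J ⊗ J ⟶ J ⊗ J, g ≫ g' = g' ≫ g) :
    Ambidextrous T J := by
  intro f
  refine ptrL_eq_ptrR T f f ?_
  rw [← Category.assoc (T.θ J ▷ J), ← Category.assoc (β_ J J).hom, h (β_ J J).hom,
    Category.assoc, Iso.hom_inv_id, Category.comp_id]
  have hconj : T.θ J ▷ J = J ◁ T.θ J := by
    rw [← cancel_epi (β_ J J).hom, h, BraidedCategory.braiding_naturality_left]
  rw [hconj, h]

end RibbonPaper
end

section
/- If an object J of C is ambidextrous, then its dual J* is ambidextrous. -/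
open CategoryTheory MonoidalCategory

namespace RibbonPaper

variable {C : Type*} [Category C] [MonoidalCategory C] [BraidedCategory C]
  [Preadditive C] [MonoidalPreadditive C] [RightRigidCategory C]

variable (T : Twist C)

section PartialClosure

variable {D : Type*} [Category D] [MonoidalCategory D]

/-- Close the second tensor factor of `f` on the right with a cup `c` and a cap `e`. -/
def closeR {U V W : D} (c : 𝟙_ D ⟶ V ⊗ W) (e : V ⊗ W ⟶ 𝟙_ D) (f : U ⊗ V ⟶ U ⊗ V) : U ⟶ U :=
  (ρ_ U).inv ≫ (U ◁ c) ≫ (α_ U V W).inv ≫ (f ▷ W) ≫ (α_ U V W).hom ≫ (U ◁ e) ≫ (ρ_ U).hom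

/-- Close the first tensor factor of `f` on the left with a cup `c` and a cap `e`. -/
def closeL {U V W : D} (c : 𝟙_ D ⟶ W ⊗ U) (e : W ⊗ U ⟶ 𝟙_ D) (f : U ⊗ V ⟶ U ⊗ V) : V ⟶ V :=
  (λ_ V).inv ≫ (c ▷ V) ≫ (α_ W U V).hom ≫ (W ◁ f) ≫ (α_ W U V).inv ≫ (e ▷ V) ≫ (λ_ V).hom

theorem closeR_congr {U V W W' : D} (i : W ≅ W') (c : 𝟙_ D ⟶ V ⊗ W) (e : V ⊗ W ⟶ 𝟙_ D)
    (f : U ⊗ V ⟶ U ⊗ V) : closeR (c ≫ V ◁ i.hom) (V ◁ i.inv ≫ e) f = closeR c e f := by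
  have h : (U ⊗ V) ◁ i.hom ≫ f ▷ W' ≫ (U ⊗ V) ◁ i.inv = f ▷ W := by
    rw [whisker_exchange_assoc, ← whiskerLeft_comp]; simp
  simp only [closeR, ← h]
  monoidal

theorem closeL_congr {U V W W' : D} (i : W ≅ W') (c : 𝟙_ D ⟶ W ⊗ U) (e : W ⊗ U ⟶ 𝟙_ D)
    (f : U ⊗ V ⟶ U ⊗ V) : closeL (c ≫ i.hom ▷ U) (i.inv ▷ U ≫ e) f = closeL c e f := by
  have h : i.hom ▷ (U ⊗ V) ≫ W' ◁ f ≫ i.inv ▷ (U ⊗ V) = W ◁ f := by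
    rw [← whisker_exchange_assoc, ← comp_whiskerRight]; simp
  simp only [closeL, ← h]
  monoidal

/-- A morphism and its mate give the same result when paired with the evaluation, respectively
the coevaluation, of an exact pairing. -/
theorem exists_mate {Y X : D} [ExactPairing Y X] (f : Y ⟶ Y) :
    ∃ g : X ⟶ X, g ▷ Y ≫ ε_ Y X = X ◁ f ≫ ε_ Y X ∧ η_ Y X ≫ Y ◁ g = η_ Y X ≫ f ▷ X := by
  let _ : HasRightDual Y := ⟨X⟩
  exact ⟨rightAdjointMate f, rightAdjointMate_comp_evaluation f,
    coevaluation_comp_rightAdjointMate f⟩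

theorem eq_of_mate {Y X : D} [ExactPairing Y X] {s t : Y ⟶ Y} {g : X ⟶ X}
    (hs : g ▷ Y ≫ ε_ Y X = X ◁ s ≫ ε_ Y X) (ht : η_ Y X ≫ Y ◁ g = η_ Y X ≫ t ▷ X) : s = t := by
  calc
    s = (λ_ Y).inv ≫ (η_ Y X ▷ Y ≫ (α_ _ _ _).hom ≫ Y ◁ ε_ Y X) ≫ (ρ_ Y).hom ≫ s := by simp
    _ = 𝟙 _ ⊗≫ (η_ Y X ▷ Y ≫ (Y ⊗ X) ◁ s) ⊗≫ Y ◁ ε_ Y X ⊗≫ 𝟙 _ := by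
      rw [← whisker_exchange]
      simp [monoidalComp]
    _ = 𝟙 _ ⊗≫ η_ Y X ▷ Y ⊗≫ Y ◁ (X ◁ s ≫ ε_ Y X) ⊗≫ 𝟙 _ := by monoidal
    _ = 𝟙 _ ⊗≫ (η_ Y X ≫ Y ◁ g) ▷ Y ⊗≫ Y ◁ ε_ Y X ⊗≫ 𝟙 _ := by rw [← hs]; monoidal
    _ = 𝟙 _ ⊗≫ η_ Y X ▷ Y ⊗≫ (t ▷ (X ⊗ Y) ≫ Y ◁ ε_ Y X) ⊗≫ 𝟙 _ := by rw [ht]; monoidal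
    _ = (λ_ Y).inv ≫ (η_ Y X ▷ Y ≫ (α_ _ _ _).hom ≫ Y ◁ ε_ Y X) ≫ (ρ_ Y).hom ≫ t := by
      rw [← whisker_exchange]; monoidal
    _ = t := by simp

/-- Transposition along an exact pairing exchanges the left and right closures. -/
theorem closeL_eq_closeR_of_exactPairing {Y X : D} [ExactPairing Y X] (b : 𝟙_ D ⟶ X ⊗ Y)
    (d : Y ⊗ X ⟶ 𝟙_ D)
    (h : ∀ g : X ⊗ X ⟶ X ⊗ X, closeL (η_ Y X) d g = closeR b (ε_ Y X) g)
    (f : Y ⊗ Y ⟶ Y ⊗ Y) : closeL b (ε_ Y X) f = closeR (η_ Y X) d f := by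
  obtain ⟨g, hg, hg'⟩ := exists_mate (X := X ⊗ X) f
  rw [ExactPairing.tensor_evaluation] at hg
  rw [ExactPairing.tensor_coevaluation] at hg'
  refine eq_of_mate (g := closeR b (ε_ Y X) g) ?_ ?_
  · calc
      _ = 𝟙 _ ⊗≫ X ◁ b ▷ Y ⊗≫ (g ▷ (Y ⊗ Y) ≫ (𝟙 _ ⊗≫ X ◁ (ε_ Y X ▷ Y) ⊗≫ ε_ Y X)) := by
        dsimp only [closeR]; monoidal
      _ = _ := by
        rw [hg]; dsimp only [closeL]; monoidal
  · rw [← h]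
    calc
      _ = ((η_ Y X ⊗≫ (Y ◁ η_ Y X) ▷ X ⊗≫ 𝟙 _) ≫ (Y ⊗ Y) ◁ g) ⊗≫ Y ◁ d ▷ X ⊗≫ 𝟙 _ := by
        dsimp only [closeL]; monoidal
      _ = _ := by
        rw [hg']; dsimp only [closeR]; monoidal

/-- Two exact pairings with the same first object agree up to an isomorphism. -/
theorem exists_iso_of_exactPairing {Y X X' : D} (p : ExactPairing Y X) (q : ExactPairing Y X') :
    ∃ i : X ≅ X', q.coevaluation = p.coevaluation ≫ Y ◁ i.hom ∧
      q.evaluation = i.inv ▷ Y ≫ p.evaluation := by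
  refine ⟨rightDualIso p q, ?_, ?_⟩
  · have h := @coevaluation_comp_rightAdjointMate _ _ _ Y Y ⟨X'⟩ ⟨X⟩ (𝟙 Y)
    rw [id_whiskerRight, Category.comp_id] at h
    exact h.symm
  · have h := @rightAdjointMate_comp_evaluation _ _ _ Y Y ⟨X⟩ ⟨X'⟩ (𝟙 Y)
    rw [whiskerLeft_id, Category.id_comp] at h
    exact h.symm

end PartialClosure

section Twist

variable {D : Type*} [Category D] [MonoidalCategory D] [BraidedCategory D]
  [RightRigidCategory D] (S : Twist D)

theorem Twist.θ_unit_s11 : S.θ (𝟙_ D) = 𝟙 _ := by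
  have := S.isIso (𝟙_ D)
  have hβ : (β_ (𝟙_ D) (𝟙_ D)).hom = 𝟙 _ := by
    rw [braiding_tensorUnit_left, unitors_equal, Iso.hom_inv_id]
  have h := S.natural (λ_ (𝟙_ D)).hom
  rw [S.tensor, hβ, Category.comp_id, Category.comp_id, MonoidalCategory.tensorHom_def,
    Category.assoc, leftUnitor_naturality, ← Category.assoc, cancel_mono, unitors_equal,
    rightUnitor_naturality] at h
  rw [← cancel_epi (ρ_ (𝟙_ D)).hom, ← h, Category.comp_id]

theorem Twist.coevaluation_θ (V : D) :
    η_ V Vᘁ ≫ (S.θ V ⊗ₘ S.θ Vᘁ) ≫ (β_ V Vᘁ).hom ≫ (β_ Vᘁ V).hom = η_ V Vᘁ := by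
  rw [← S.tensor, S.natural, S.θ_unit_s11, Category.id_comp]

theorem Twist.evaluation_θ (V : D) :
    (S.θ Vᘁ ⊗ₘ S.θ V) ≫ (β_ Vᘁ V).hom ≫ (β_ V Vᘁ).hom ≫ ε_ V Vᘁ = ε_ V Vᘁ := by
  have h := S.natural (ε_ V Vᘁ)
  rw [S.tensor, S.θ_unit_s11, Category.comp_id] at h
  simpa using h.symm

/-- The dual object paired with the original one through the twisted cup and cap. -/
noncomputable abbrev twistedPairing (V : D) : ExactPairing Vᘁ V :=
  have := S.isIso Vᘁ
  @exactPairingCongrLeft _ _ _ Vᘁ Vᘁ V (BraidedCategory.exactPairing_swap V Vᘁ) (asIso (S.θ Vᘁ))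

theorem twistedPairing_coevaluation (V : D) : (twistedPairing S V).coevaluation = bP S V := by
  have := S.isIso Vᘁ
  change (η_ V Vᘁ ≫ (β_ Vᘁ V).inv) ≫ inv (S.θ Vᘁ) ▷ V = _
  rw [← cancel_mono (S.θ Vᘁ ▷ V), ← cancel_mono (β_ Vᘁ V).hom]
  conv_rhs => rw [bP]
  nth_rw 1 [← S.coevaluation_θ V]
  simp [MonoidalCategory.tensorHom_def]

theorem twistedPairing_evaluation (V : D) : (twistedPairing S V).evaluation = dP S V := by
  change V ◁ S.θ Vᘁ ≫ (β_ V Vᘁ).hom ≫ ε_ V Vᘁ = _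
  rw [dP, tensorHom_id, BraidedCategory.braiding_naturality_right_assoc,
    BraidedCategory.braiding_naturality_left_assoc, S.dual, rightAdjointMate_comp_evaluation]

/-- Up to an isomorphism `V ≅ Vᘁᘁ`, passing to the dual exchanges the standard cup and cap with
the twisted ones. -/
theorem exists_iso_double_dual (V : D) : ∃ i : V ≅ (Vᘁ)ᘁ,
    η_ Vᘁ (Vᘁ)ᘁ = bP S V ≫ Vᘁ ◁ i.hom ∧ ε_ Vᘁ (Vᘁ)ᘁ = i.inv ▷ Vᘁ ≫ dP S V ∧
      bP S Vᘁ = η_ V Vᘁ ≫ i.hom ▷ Vᘁ ∧ dP S Vᘁ = Vᘁ ◁ i.inv ≫ ε_ V Vᘁ := by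
  obtain ⟨i, hη, hε⟩ := exists_iso_of_exactPairing (twistedPairing S V)
    (HasRightDual.exact (X := Vᘁ))
  rw [twistedPairing_coevaluation] at hη
  rw [twistedPairing_evaluation] at hε
  refine ⟨i, hη, hε, ?_, ?_⟩
  · rw [bP]
    rw [hη]
    conv_rhs => rw [← S.coevaluation_θ V]
    simp [bP, MonoidalCategory.tensorHom_def, whisker_exchange]
  · rw [dP]
    rw [hε]
    conv_rhs => rw [← S.evaluation_θ V]
    simp [dP, MonoidalCategory.tensorHom_def, whisker_exchange_assoc]

end Twist

/-- If `J` is ambidextrous, then so is its dual `J*`. -/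
theorem statement11 (J : C) (h : Ambidextrous T J) : Ambidextrous T (Jᘁ) := by
  intro f
  obtain ⟨i, hη, hε, hb, hd⟩ := exists_iso_double_dual T J
  have hL : ptrL T f = closeL (η_ J Jᘁ) (dP T J) f := by
    rw [← closeL_congr i, ← hb, ← hε]; rfl
  have hR : ptrR T f = closeR (bP T J) (ε_ J Jᘁ) f := by
    rw [← closeR_congr i, ← hη, ← hd]; rfl
  rw [hL, hR, ← twistedPairing_coevaluation, ← twistedPairing_evaluation]
  let _ := twistedPairing T J
  refine closeL_eq_closeR_of_exactPairing _ _ (fun g => ?_) f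
  rw [twistedPairing_coevaluation, twistedPairing_evaluation]
  exact h g

end RibbonPaper
end
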